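/- Let G be a character on k⟨a,b⟩. Then for all graded posets P and Q of rank at least 1, the type B power series gF_B satisfies gF_B(P ◇ Q) = gF_B(P) · gF_B(Q); that is, the chain map of the first kind is an algebra homomorphism on type B quasisymmetric functions of posets with respect to the diamond product. -/

import Mathlib

open scoped TensorProduct

noncomputable section

namespace Tcheb

/-! ### The algebra `R⟨a,b⟩` of ab-polynomials -/

/-- Words in the two noncommuting letters `a` (encoded `true`) and `b` (encoded `false`). -/
abbrev ABWord : Type := FreeMonoid Bool

/-- The ring `R⟨a,b⟩` of polynomials in two noncommuting variables `a` and `b`. -/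
abbrev AB (R : Type) [CommRing R] : Type := MonoidAlgebra R ABWord

variable (R : Type) [CommRing R]

/-- The ab-monomial corresponding to a word. -/
def word (l : List Bool) : AB R := MonoidAlgebra.of R ABWord (FreeMonoid.ofList l)

/-- The variable `a`. -/
def av : AB R := word R [true]
/-- The variable `b`. -/
def bv : AB R := word R [false]
/-- `c = a + b`. -/
def cv : AB R := av R + bv R
/-- `d = ab + ba`. -/
def dv : AB R := av R * bv R + bv R * av R
/-- `a - b`. -/
def ev : AB R := av R - bv R

/-- The linear map defined by prescribing values on the basis of ab-monomials. -/
def onBasis {M : Type} [AddCommMonoid M] [Module R M] (f : List Bool → M) :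
    AB R →ₗ[R] M :=
  (Finsupp.lift M R ABWord fun w => f (FreeMonoid.toList w)) ∘ₗ
    (MonoidAlgebra.coeffLinearEquiv R).toLinearMap

/-- The algebra map `A` with `A(a) = 1`, `A(b) = 0`. -/
def Amap : AB R →ₐ[R] R :=
  MonoidAlgebra.lift R R ABWord (FreeMonoid.lift fun x => if x then (1 : R) else 0)

/-- The coproduct on `R⟨a,b⟩`: on an ab-monomial `u₁ ⋯ u_k` it is
`Σ_{i=1}^k u₁ ⋯ u_{i-1} ⊗ u_{i+1} ⋯ u_k`. -/
def Delta : AB R →ₗ[R] AB R ⊗[R] AB R :=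
  onBasis R fun w => ∑ i ∈ Finset.range w.length,
    word R (w.take i) ⊗ₜ[R] word R (w.drop (i + 1))

/-- The linear map `C(u) = 2·A(u) + Σ_u A(u₍₁₎)·A(u₍₂₎)`. -/
def Cmap : AB R →ₗ[R] R :=
  2 • (Amap R).toLinearMap +
    (LinearMap.mul' R R ∘ₗ
      TensorProduct.map (Amap R).toLinearMap (Amap R).toLinearMap) ∘ₗ Delta R

/-- `κ(u) = A(u)·(a-b)^(deg u)` on homogeneous `u`, extended linearly. -/
def kappa : AB R →ₗ[R] AB R :=
  onBasis R fun w => Amap R (word R w) • ev R ^ w.length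

/-- `ν(u) = C(u)·(a-b)^(deg u)` on homogeneous `u`, extended linearly. -/
def nuMap : AB R →ₗ[R] AB R :=
  onBasis R fun w => Cmap R (word R w) • ev R ^ w.length

end Tcheb

namespace Tcheb

/-- Cutting a word into the list of segments between the (sorted) cut positions. -/
def segments : List Bool → List ℕ → List (List Bool)
  | l, [] => [l]
  | l, i :: rest => l.take i :: segments (l.drop (i + 1)) (rest.map fun j => j - (i + 1))
  termination_by _ cuts => cuts.length
  decreasing_by simp

variable (R : Type) [CommRing R]

/-- For segments `[s₁, …, s_k]` this is `ν(s₁)·b·ν(s₂)·b ⋯ b·ν(s_{k-1})·b·κ(s_k)`. -/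
def chainProd : List (List Bool) → AB R
  | [] => 1
  | [s] => kappa R (word R s)
  | s :: rest => nuMap R (word R s) * bv R * chainProd rest

/-- The Tchebyshev transform (of the first kind) on ab-polynomials:
`T(u) = Σ_{k ≥ 1} Σ_u ν(u₍₁₎)·b·ν(u₍₂₎)·b ⋯ b·ν(u₍ₖ₋₁₎)·b·κ(u₍ₖ₎)`,
where the inner sum is over the `k`-fold coproduct.  On the ab-monomial basis this
is the sum, over all sets of positions of deleted letters, of the corresponding
products over the resulting segments. -/
def Tmap : AB R →ₗ[R] AB R :=
  onBasis R fun w => ∑ S : Finset (Fin w.length),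
    chainProd R (segments w ((S.sort (· ≤ ·)).map Fin.val))

/-- The `ω` map on a word: replace each occurrence of `ab` by `2d` and all
remaining letters by `c`. -/
def omegaWord : List Bool → AB R
  | [] => 1
  | true :: false :: rest => (2 * dv R) * omegaWord rest
  | _ :: rest => cv R * omegaWord rest

/-- The `ω` map of Billera–Ehrenborg–Readdy. -/
def omegaMap : AB R →ₗ[R] AB R := onBasis R fun w => omegaWord R w

/-- The reversal involution `u ↦ u*` of ab-polynomials. -/
def revMap : AB R →ₗ[R] AB R := onBasis R fun w => word R w.reverse

/-- `H*(1) = 0` and `H*(u·a) = H*(u·b) = u`. -/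
def Hstar : AB R →ₗ[R] AB R :=
  onBasis R fun w => if w = [] then 0 else word R w.dropLast

/-- The Tchebyshev transform of the second kind `U(u) = H*(T(u·a))`. -/
def Umap : AB R →ₗ[R] AB R := Hstar R ∘ₗ Tmap R ∘ₗ LinearMap.mulRight R (av R)

/-- `σ(u) = Σ_u κ(u₍₁₎)·b·T(u₍₂₎)`. -/
def sigmaMap : AB R →ₗ[R] AB R :=
  LinearMap.mul' R (AB R) ∘ₗ
    TensorProduct.map (LinearMap.mulRight R (bv R) ∘ₗ kappa R) (Tmap R) ∘ₗ Delta R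

/-! ### Graded posets and the ab-index -/

/-- `rk` is a rank function for a bounded poset: `rk ⊥ = 0` and covers raise rank by one. -/
def IsRankFun (α : Type) [PartialOrder α] [OrderBot α] (rk : α → ℕ) : Prop :=
  rk ⊥ = 0 ∧ ∀ x y : α, x ⋖ y → rk y = rk x + 1

/-- `f` lists the elements of a chain in increasing order with respect to the
strict order relation `lt`. -/
def IsStrictChain {α : Type} (lt : α → α → Prop) {n : ℕ} (f : Fin (n + 1) → α) : Prop :=
  ∀ i j : Fin (n + 1), i < j → lt (f i) (f j)

/-- The weight of a chain `x₀ < x₁ < ⋯ < x_k`: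
`(a-b)^{ρ(x₀,x₁)-1}·b·(a-b)^{ρ(x₁,x₂)-1}·b ⋯ b·(a-b)^{ρ(x_{k-1},x_k)-1}`. -/
def chainWt {α : Type} (rk : α → ℕ) {n : ℕ} (f : Fin (n + 1) → α) : AB R :=
  (List.intersperse (bv R)
    (List.ofFn fun i : Fin n => ev R ^ (rk (f i.succ) - rk (f i.castSucc) - 1))).prod

/-- The ab-index `Ψ` of the graded poset with strict order relation `lt`, rank
function `rk`, minimum `b` and maximum `t`: the sum of the weights of all chains
from `b` to `t`. -/
def PsiRel {α : Type} (lt : α → α → Prop) (rk : α → ℕ) (b t : α) : AB R :=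
  ∑ᶠ (n : ℕ), ∑ᶠ (f : Fin (n + 1) → α)
    (_ : IsStrictChain lt f ∧ f 0 = b ∧ f (Fin.last n) = t), chainWt R rk f

end Tcheb

namespace Tcheb

/-! ### The Tchebyshev transform of a graded poset -/

section TPoset

variable (α : Type) [PartialOrder α] [BoundedOrder α]

/-- The elements `[x,y]` of the Tchebyshev transform: intervals of `P ∪ {-1̂}`,
i.e. pairs `(x,y)` with `x ∈ P ∪ {-1̂}`, `y ∈ P` and `x < y`. -/
def TPel : Type := {p : WithBot α × α // p.1 < (p.2 : WithBot α)}

/-- The underlying set of the Tchebyshev transform `T(P)`: the intervals `[x,y]`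
together with a new maximum element (`none`). -/
def TP : Type := Option (TPel α)

/-- The cover relation of the Tchebyshev transform `T(P)`:
`[x,y] ⋖ [y,w]` and `[x,y] ⋖ [x,w]` whenever `y ⋖ w` in `P`, and `[x,1̂] ⋖ 1̂_{T(P)}`. -/
inductive TPcov : TP α → TP α → Prop
  | up {x : WithBot α} {y w : α} (h1 : x < (y : WithBot α))
      (h2 : (y : WithBot α) < (w : WithBot α)) (hc : y ⋖ w) :
      TPcov (some ⟨(x, y), h1⟩) (some ⟨((y : WithBot α), w), h2⟩)
  | same {x : WithBot α} {y w : α} (h1 : x < (y : WithBot α))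
      (h2 : x < (w : WithBot α)) (hc : y ⋖ w) :
      TPcov (some ⟨(x, y), h1⟩) (some ⟨(x, w), h2⟩)
  | top {x : WithBot α} (h1 : x < ((⊤ : α) : WithBot α)) :
      TPcov (some ⟨(x, (⊤ : α)), h1⟩) none

/-- The strict order relation of `T(P)`, generated by the cover relation. -/
def TPlt : TP α → TP α → Prop := Relation.TransGen (TPcov α)

/-- The order relation of `T(P)`, generated by the cover relation. -/
def TPle : TP α → TP α → Prop := Relation.ReflTransGen (TPcov α)

/-- The minimum element `[-1̂, 0̂]` of `T(P)`. -/
def TPbot : TP α := some ⟨((⊥ : WithBot α), (⊥ : α)), WithBot.bot_lt_coe _⟩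

/-- The maximum element `1̂_{T(P)}` of `T(P)`. -/
def TPtop : TP α := none

/-- The rank function of `T(P)`: `ρ([x,y]) = ρ(y)` and `ρ(1̂_{T(P)}) = ρ(P) + 1`. -/
def TPrk (rk : α → ℕ) : TP α → ℕ
  | some p => rk p.1.2
  | none => rk (⊤ : α) + 1

theorem TPbot_ne_TPtop : TPbot α ≠ TPtop α := by exact Option.some_ne_none _

/-- The map `z : T(P) → P ∪ {2̂}` with `z([x,y]) = y` and `z(1̂_{T(P)}) = 2̂`. -/
def zmap : TP α → WithTop α
  | some p => (p.1.2 : WithTop α)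
  | none => ⊤

/-- The number of elements of the interval `[u,v]` of `P`, for `u, v ∈ P ∪ {2̂}`. -/
def intervalCard (u v : WithTop α) : ℕ :=
  Set.ncard {t : α | u ≤ (t : WithTop α) ∧ (t : WithTop α) ≤ v}

end TPoset

/-! ### The dual diamond product -/

/-- The strict order relation of the dual diamond product
`P ◇* Q = ((P ∖ {1̂}) × (Q ∖ {1̂})) ∪ {1̂}` (with `none` the new maximum), built from
the order relations `leA, ltA` and `leB, ltB` of the two factors. -/
def dsLT {A B : Type} (leA ltA : A → A → Prop) (leB ltB : B → B → Prop) :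
    Option (A × B) → Option (A × B) → Prop
  | some p, some q => (leA p.1 q.1 ∧ leB p.2 q.2) ∧ (ltA p.1 q.1 ∨ ltB p.2 q.2)
  | some _, none => True
  | none, _ => False

/-! ### EL-labelings -/

/-- The list of edge labels along a chain (given as a list of poset elements). -/
def labelsList {α Λ : Type} (lam : α → α → Λ) (l : List α) : List Λ :=
  (l.zip l.tail).map fun p => lam p.1 p.2

/-- `l` is a maximal (saturated) chain of the interval `[x,y]` with respect to the
cover relation `cov`: it runs from `x` to `y` and every step is a cover. -/
def IsMaxChainList {α : Type} (cov : α → α → Prop) (x y : α) (l : List α) : Prop :=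
  l.head? = some x ∧ l.getLast? = some y ∧ l.Chain' cov

/-- An `EL`-labeling of the poset whose cover relation is `cov`, with labels in the
linearly ordered set `(Λ, lle, llt)`: every interval has a unique rising maximal
chain, which moreover is lexicographically least among all maximal chains of the
interval. -/
def IsELLabeling (α Λ : Type) (lle llt : Λ → Λ → Prop)
    (cov : α → α → Prop) (lam : α → α → Λ) : Prop :=
  ∀ x y : α, Relation.ReflTransGen cov x y →
    ∃ l : List α, (IsMaxChainList cov x y l ∧ (labelsList lam l).Chain' lle) ∧
      (∀ l' : List α, IsMaxChainList cov x y l' →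
        (labelsList lam l').Chain' lle → l' = l) ∧
      (∀ l' : List α, IsMaxChainList cov x y l' →
        labelsList lam l = labelsList lam l' ∨
          List.Lex llt (labelsList lam l) (labelsList lam l'))

/-! ### Eulerian posets -/

/-- A graded poset is Eulerian if every nontrivial interval `[x,y]` has the
same number of elements of even rank as of odd rank. -/
def IsEulerian (α : Type) [PartialOrder α] (rk : α → ℕ) : Prop :=
  ∀ x y : α, x < y →
    Set.ncard {z : α | x ≤ z ∧ z ≤ y ∧ Even (rk z)} =
      Set.ncard {z : α | x ≤ z ∧ z ≤ y ∧ ¬ Even (rk z)}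

/-! ### The face lattice of the crosspolytope -/

/-- A face of the `n`-dimensional crosspolytope: a partial sign vector, i.e. the
pair `(S, ε)` of a subset `S ⊆ {1,…,n}` (the set of coordinates where the function
takes a value `some`) together with a sign function `ε` on `S`. -/
def CrossEl (n : ℕ) : Type := Fin n → Option Bool

/-- `(S,ε) ≤ (T,δ)` iff `S ⊆ T` and `δ` restricted to `S` is `ε`. -/
instance (n : ℕ) : PartialOrder (CrossEl n) where
  le f g := ∀ i s, f i = some s → g i = some s
  le_refl f i s h := h
  le_trans f g h fg gh i s hi := gh i s (fg i s hi)
  le_antisymm f g fg gf := by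
    funext i
    cases hf : f i with
    | some s => exact (fg i s hf).symm
    | none =>
      cases hg : g i with
      | some s => exact absurd (gf i s hg) (by simp [hf])
      | none => rfl

/-- The face lattice of the `n`-dimensional crosspolytope: all partial sign
vectors together with a new maximum element. -/
abbrev Cross (n : ℕ) : Type := WithTop (CrossEl n)

/-- The rank function of the face lattice of the crosspolytope:
`ρ(S,ε) = |S|` and the maximum has rank `n + 1`. -/
def crossRk (n : ℕ) : Cross n → ℕ
  | none => n + 1
  | some f => (Finset.univ.filter fun i : Fin n => (f i).isSome).card

/-- The minimal element (the empty face) of the crosspolytope face lattice. -/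
def crossBot (n : ℕ) : Cross n := WithTop.some (fun _ => none)

/-- The maximal element of the crosspolytope face lattice. -/
def crossTop (n : ℕ) : Cross n := ⊤

/-! ### Quasisymmetric functions -/

/-- The monomial quasisymmetric function `M_{(p₁,…,p_k)}`, as a formal power
series in the countably many commuting variables `t₁, t₂, …` (indexed by `ℕ`). -/
def MQ (R : Type) [CommRing R] (ps : List ℕ) : MvPowerSeries ℕ R :=
  fun m => if ((m.support.sort (· ≤ ·)).map fun i => m i) = ps then 1 else 0

/-- The `t`-part of a monomial in the variables `s` (index `none`) and
`t₁, t₂, …` (indices `some i`). -/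
def tpart (m : Option ℕ →₀ ℕ) : ℕ →₀ ℕ :=
  Finsupp.comapDomain some m (Option.some_injective ℕ).injOn

/-- The type B monomial quasisymmetric function `s^p · M_{(p₁,…,p_k)}`, a formal
power series in the variables `s` (index `none`) and `t₁, t₂, …` (indices `some i`). -/
def MB (R : Type) [CommRing R] (p : ℕ) (ps : List ℕ) : MvPowerSeries (Option ℕ) R :=
  fun m => if m none = p ∧
      (((tpart m).support.sort (· ≤ ·)).map fun i => tpart m i) = ps then 1 else 0

/-- The quasisymmetric function `F(P)` of the graded poset with strict order
relation `lt`, rank function `rk`, minimum `b` and maximum `t`: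
`F(P) = Σ_c M_{(ρ(x₀,x₁),…,ρ(x_{k-1},x_k))}` over all chains `c` from `b` to `t`. -/
def FQ (R : Type) [CommRing R] {α : Type} (lt : α → α → Prop) (rk : α → ℕ)
    (b t : α) : MvPowerSeries ℕ R :=
  ∑ᶠ (n : ℕ), ∑ᶠ (f : Fin (n + 1) → α)
    (_ : IsStrictChain lt f ∧ f 0 = b ∧ f (Fin.last n) = t),
    MQ R (List.ofFn fun i : Fin n => rk (f i.succ) - rk (f i.castSucc))

/-- The type B quasisymmetric function `F_B(P) = Σ_{0̂ < x ≤ 1̂} s^{ρ(x)-1}·F([x,1̂])`,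
written as a sum over all chains `0̂ < x₀ < x₁ < ⋯ < x_k = 1̂` of
`s^{ρ(x₀)-1}·M_{(ρ(x₀,x₁),…,ρ(x_{k-1},x_k))}`. -/
def FB (R : Type) [CommRing R] {α : Type} (lt : α → α → Prop) (rk : α → ℕ)
    (b t : α) : MvPowerSeries (Option ℕ) R :=
  ∑ᶠ (n : ℕ), ∑ᶠ (f : Fin (n + 1) → α)
    (_ : IsStrictChain lt f ∧ lt b (f 0) ∧ f (Fin.last n) = t),
    MB R (rk (f 0) - 1) (List.ofFn fun i : Fin n => rk (f i.succ) - rk (f i.castSucc))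

/-! ### Characters and the chain maps -/

/-- A character on `k⟨a,b⟩`: a linear functional which is multiplicative with
respect to Cartesian products of graded posets (of rank at least 1). -/
def IsCharacter (k : Type) [Field k] (G : AB k →ₗ[k] k) : Prop :=
  ∀ (α β : Type) [Fintype α] [Fintype β] [PartialOrder α] [PartialOrder β]
    [BoundedOrder α] [BoundedOrder β], ∀ (rkα : α → ℕ) (rkβ : β → ℕ),
    IsRankFun α rkα → IsRankFun β rkβ → 1 ≤ rkα ⊤ → 1 ≤ rkβ ⊤ →
    G (PsiRel k (· < ·) (fun p : α × β => rkα p.1 + rkβ p.2)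
        ((⊥ : α), (⊥ : β)) ((⊤ : α), (⊤ : β))) =
      G (PsiRel k (· < ·) rkα ⊥ ⊤) * G (PsiRel k (· < ·) rkβ ⊥ ⊤)

/-- The quasisymmetric function image `g̃F(P)` of the chain map of the second kind:
`Σ_c G(Ψ([x₀,x₁])) ⋯ G(Ψ([x_{k-1},x_k])) · M_{(ρ(x₀,x₁),…,ρ(x_{k-1},x_k))}`,
summed over all chains `c = {b = x₀ < ⋯ < x_k = t}`. -/
def gtF (k : Type) [Field k] (G : AB k →ₗ[k] k) {α : Type} (lt : α → α → Prop)
    (rk : α → ℕ) (b t : α) : MvPowerSeries ℕ k :=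
  ∑ᶠ (n : ℕ), ∑ᶠ (f : Fin (n + 1) → α)
    (_ : IsStrictChain lt f ∧ f 0 = b ∧ f (Fin.last n) = t),
    (∏ i : Fin n, G (PsiRel k lt rk (f i.castSucc) (f i.succ))) •
      MQ k (List.ofFn fun i : Fin n => rk (f i.succ) - rk (f i.castSucc))

/-- The type B quasisymmetric function image `gF_B(P) = Σ_{0̂ < x ≤ 1̂}
s^{ρ(x)-1}·g̃F([x,1̂])` of the chain map of the first kind, written as a sum over
all chains `0̂ < x₀ < ⋯ < x_k = 1̂`. -/
def gFB (k : Type) [Field k] (G : AB k →ₗ[k] k) {α : Type} (lt : α → α → Prop)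
    (rk : α → ℕ) (b t : α) : MvPowerSeries (Option ℕ) k :=
  ∑ᶠ (n : ℕ), ∑ᶠ (f : Fin (n + 1) → α)
    (_ : IsStrictChain lt f ∧ lt b (f 0) ∧ f (Fin.last n) = t),
    (∏ i : Fin n, G (PsiRel k lt rk (f i.castSucc) (f i.succ))) •
      MB k (rk (f 0) - 1) (List.ofFn fun i : Fin n => rk (f i.succ) - rk (f i.castSucc))

/-- The space of homogeneous ab-polynomials of degree `n`. -/
def ABhomog (k : Type) [Field k] (n : ℕ) : Submodule k (AB k) :=
  Submodule.span k {x : AB k | ∃ w : List Bool, w.length = n ∧ x = word k w}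

section Helpers

open Finset

theorem rank_strictMono {α : Type} [Fintype α] [PartialOrder α] [OrderBot α] {rk : α → ℕ}
    (h : IsRankFun α rk) : StrictMono rk := by
  have key : ∀ y x : α, x < y → rk x < rk y := by
    intro y
    induction y using WellFoundedLT.induction with
    | ind y ih =>
      intro x hxy
      obtain ⟨z, hz, hzy⟩ := exists_le_covBy_of_lt hxy
      have := h.2 z y hzy
      rcases hz.eq_or_lt with rfl | hlt
      · omega
      · have := ih z hzy.lt x hlt
        omega
  intro x y hxy
  exact key y x hxy

/-- Transport of the ab-index along an embedding with convex image. -/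
theorem PsiRel_transport (k : Type) [CommRing k] {A B : Type} [PartialOrder A] [PartialOrder B]
    (ι : A → B) (hlt : ∀ x y, ι x < ι y ↔ x < y) (hinj : Function.Injective ι)
    (rA : A → ℕ) (rB : B → ℕ) (c : ℕ) (hr : ∀ x, rB (ι x) = rA x + c) (b t : A)
    (hconv : ∀ z, ι b ≤ z → z ≤ ι t → ∃ x, ι x = z) :
    PsiRel k (· < ·) rB (ι b) (ι t) = PsiRel k (· < ·) rA b t := by
  unfold PsiRel
  apply finsum_congr
  intro n
  symm
  apply finsum_mem_eq_of_bijOn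
    (s := {f : Fin (n + 1) → A | IsStrictChain (· < ·) f ∧ f 0 = b ∧ f (Fin.last n) = t})
    (t := {f : Fin (n + 1) → B | IsStrictChain (· < ·) f ∧ f 0 = ι b ∧ f (Fin.last n) = ι t})
    (fun f i => ι (f i))
  · refine ⟨?_, ?_, ?_⟩
    · rintro f ⟨h1, h2, h3⟩
      refine ⟨fun i j hij => (hlt _ _).2 (h1 i j hij), by simp [h2], by simp [h3]⟩
    · intro f _ g _ hfg
      funext i
      exact hinj (congrFun hfg i)
    · rintro f ⟨h1, h2, h3⟩
      have hm : StrictMono f := fun i j hij => h1 i j hij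
      have : ∀ i, ∃ x, ι x = f i := fun i => hconv _
        (h2 ▸ hm.monotone (Fin.zero_le i)) (h3 ▸ hm.monotone (Fin.le_last i))
      choose g hg using this
      refine ⟨g, ⟨fun i j hij => ?_, ?_, ?_⟩, funext hg⟩
      · change g i < g j
        rw [← hlt, hg, hg]; exact h1 i j hij
      · apply hinj; rw [hg, h2]
      · apply hinj; rw [hg, h3]
  · intro f _
    simp [chainWt, hr, Nat.add_sub_add_right]

open Classical in
/-- The two-variable function `g(x,y) = G(Ψ([x,y]))`, normalized to `1` on the diagonal and `0`
off the order relation. -/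
def gk (k : Type) [Field k] (G : AB k →ₗ[k] k) {A : Type} [PartialOrder A] (rk : A → ℕ)
    (x y : A) : k :=
  if x = y then 1 else if x < y then G (PsiRel k (· < ·) rk x y) else 0

theorem gk_eq_zero (k : Type) [Field k] (G : AB k →ₗ[k] k) {A : Type} [PartialOrder A] (rk : A → ℕ)
    (x y : A) (h : ¬ x ≤ y) : gk k G rk x y = 0 := by
  unfold gk
  rw [if_neg (fun e => h e.le), if_neg (fun e => h e.le)]

theorem matrix_ofFn_prod {k A : Type} [Field k] [Fintype A] [DecidableEq A] (n : ℕ)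
    (M : Fin n → Matrix A A k) (x y : A) :
    (List.ofFn M).prod x y = ∑ f : Fin (n + 1) → A,
      if f 0 = x ∧ f (Fin.last n) = y then ∏ i, M i (f i.castSucc) (f i.succ) else 0 := by
  induction n generalizing x with
  | zero =>
    rw [← (Equiv.funUnique (Fin 1) A).symm.sum_comp]
    simp [Matrix.one_apply, ite_and]
  | succ n ih =>
    rw [List.ofFn_succ, List.prod_cons, Matrix.mul_apply,
      ← (Fin.consEquiv (fun _ : Fin (n + 2) => A)).sum_comp, Fintype.sum_prod_type]
    simp only [ih, Fin.consEquiv, Equiv.coe_fn_mk, Fin.cons_zero]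
    conv_rhs => rw [Finset.sum_eq_single x (by intro b _ hb; simp [hb]) (by simp)]
    simp only [Finset.mul_sum]
    rw [Finset.sum_comm]
    apply Finset.sum_congr rfl
    intro f _
    conv_lhs => rw [Finset.sum_eq_single (f 0) (by intro b _ hb; simp [hb.symm]) (by simp)]
    rw [← Fin.succ_last, Fin.cons_succ]
    simp [Fin.prod_univ_succ]

/-- The list of nonzero `t`-exponents of a monomial. -/
def exps (m : Option ℕ →₀ ℕ) : List ℕ :=
  ((tpart m).support.sort (· ≤ ·)).map fun i => tpart m i

theorem exps_ne_zero (m : Option ℕ →₀ ℕ) (i : Fin (exps m).length) : (exps m).get i ≠ 0 := by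
  have h : (exps m).get i ∈ exps m := List.get_mem _ _
  generalize (exps m).get i = a at h
  simp only [exps, List.mem_map, Finset.mem_sort, Finsupp.mem_support_iff] at h
  obtain ⟨j, hj, rfl⟩ := h
  exact hj

theorem prod_filter_aux {M : Type} [Monoid M] (K : ℕ → M) (hK : K 0 = 1) (h : ℕ → ℕ)
    (l : List ℕ) :
    ((l.filter (fun i => decide (h i ≠ 0))).map (fun i => K (h i))).prod
      = (l.map (fun i => K (h i))).prod := by
  induction l with
  | nil => simp
  | cons a l ih =>
    by_cases ha : h a = 0
    · rw [List.filter_cons_of_neg (by simp [ha]), ih]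
      simp [ha, hK]
    · rw [List.filter_cons_of_pos (by simp [ha])]
      simp only [List.map_cons, List.prod_cons, ih]

theorem exps_prod {M : Type} [Monoid M] (K : ℕ → M) (hK : K 0 = 1) (m : Option ℕ →₀ ℕ)
    (N : ℕ) (hN : ∀ i, N ≤ i → m (some i) = 0) :
    ((exps m).map K).prod = (List.ofFn fun i : Fin N => K (m (some (i : ℕ)))).prod := by
  have h1 : (tpart m).support.sort (· ≤ ·) =
      (List.range N).filter (fun i => decide (tpart m i ≠ 0)) := by
    refine List.Perm.eq_of_pairwise' (r := (· ≤ ·)) (Finset.pairwise_sort _ _) ?_ ?_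
    · exact List.Pairwise.filter _ (List.pairwise_le_range)
    · rw [List.perm_ext_iff_of_nodup (Finset.sort_nodup _ _)
        (List.Nodup.filter _ List.nodup_range)]
      intro i
      simp only [Finset.mem_sort, Finsupp.mem_support_iff, List.mem_filter, List.mem_range,
        decide_eq_true_eq]
      refine ⟨fun h => ⟨?_, h⟩, fun h => h.2⟩
      by_contra hc
      exact h (hN i (not_lt.1 hc))
  have h2 : (List.ofFn fun i : Fin N => K (m (some (i : ℕ)))) =
      (List.range N).map (fun i => K (tpart m i)) := by
    apply List.ext_getElem <;> simp [tpart]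
  rw [h2, ← prod_filter_aux K hK (fun i => tpart m i), exps, h1, List.map_map]
  rfl

open Classical in
/-- The transfer matrix of steps of rank `p`. -/
def Kmat (k : Type) [Field k] (G : AB k →ₗ[k] k) {A : Type} [PartialOrder A] (rk : A → ℕ)
    (p : ℕ) : Matrix A A k := fun x y => if rk y - rk x = p then gk k G rk x y else 0

open Classical in
theorem Kmat_zero (k : Type) [Field k] (G : AB k →ₗ[k] k) {A : Type} [PartialOrder A]
    (rk : A → ℕ) (hrk : StrictMono rk) : Kmat k G rk 0 = 1 := by
  ext x y
  rw [Matrix.one_apply, Kmat]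
  by_cases hxy : x = y
  · subst hxy; simp [gk]
  · by_cases hlt : x < y
    · have := hrk hlt
      rw [if_neg (by omega), if_neg hxy]
    · simp [gk, hxy, hlt]

open Classical in
theorem prod_Kmat (k : Type) [Field k] (G : AB k →ₗ[k] k) {A : Type} [PartialOrder A]
    (rk : A → ℕ) (n : ℕ) (L : Fin n → ℕ) (hL : ∀ i, L i ≠ 0) (f : Fin (n + 1) → A) :
    ∏ i, Kmat k G rk (L i) (f i.castSucc) (f i.succ) =
      if IsStrictChain (· < ·) f ∧ ∀ i : Fin n, rk (f i.succ) - rk (f i.castSucc) = L i then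
        ∏ i : Fin n, G (PsiRel k (· < ·) rk (f i.castSucc) (f i.succ)) else 0 := by
  split_ifs with h
  · apply Finset.prod_congr rfl
    intro i _
    have hlt : f i.castSucc < f i.succ := h.1 _ _ (Fin.castSucc_lt_succ)
    rw [Kmat, if_pos (h.2 i), gk, if_neg hlt.ne, if_pos hlt]
  · have : ∃ i : Fin n, ¬ (f i.castSucc < f i.succ ∧ rk (f i.succ) - rk (f i.castSucc) = L i) := by
      by_contra hc
      push Not at hc
      apply h
      refine ⟨fun i j hij => ?_, fun i => (hc i).2⟩
      exact (Fin.strictMono_iff_lt_succ.2 fun i => (hc i).1) hij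
    obtain ⟨i, hi⟩ := this
    apply Finset.prod_eq_zero (Finset.mem_univ i)
    rw [Kmat]
    split_ifs with h2
    · have h3 : ¬ f i.castSucc < f i.succ := fun h3 => hi ⟨h3, h2⟩
      rw [gk, if_neg, if_neg h3]
      intro h4
      apply hL i
      rw [← h2, h4]; simp
    · rfl

open Classical in
theorem gFB_coeff (k : Type) [Field k] (G : AB k →ₗ[k] k) {A : Type} [Fintype A] [PartialOrder A]
    (rk : A → ℕ) (b t : A) (m : Option ℕ →₀ ℕ) :
    MvPowerSeries.coeff m (gFB k G (· < ·) rk b t) =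
      ∑ x, if b < x ∧ rk x - 1 = m none then ((exps m).map (Kmat k G rk)).prod x t else 0 := by
  unfold gFB
  simp only [finsum_eq_if, finsum_eq_sum_of_fintype]
  rw [map_finsum]
  swap
  · apply Set.Finite.subset (Set.finite_Iio (Fintype.card A))
    intro n hn
    by_contra hc
    apply hn
    apply Finset.sum_eq_zero
    intro f _
    rw [if_neg]
    rintro ⟨h, -⟩
    have hm : StrictMono f := fun i j hij => h i j hij
    have := Fintype.card_le_of_injective f hm.injective
    simp at this hc
    omega
  rw [finsum_eq_single _ (exps m).length]
  · have hl : (exps m).map (Kmat k G rk) =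
        List.ofFn (fun i : Fin (exps m).length => Kmat k G rk ((exps m).get i)) := by
      apply List.ext_getElem <;> simp
    rw [hl]
    simp only [matrix_ofFn_prod, prod_Kmat k G rk _ _ (exps_ne_zero m)]
    have hr : ∀ x : A, (if b < x ∧ rk x - 1 = m none then
        ∑ f : Fin ((exps m).length + 1) → A, (if f 0 = x ∧ f (Fin.last (exps m).length) = t then
          if IsStrictChain (fun x1 x2 => x1 < x2) f ∧
            ∀ i : Fin (exps m).length, rk (f i.succ) - rk (f i.castSucc) = (exps m).get i then
            ∏ i : Fin (exps m).length, G (PsiRel k (· < ·) rk (f i.castSucc) (f i.succ)) else 0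
          else 0) else 0) =
        ∑ f : Fin ((exps m).length + 1) → A, (if b < x ∧ rk x - 1 = m none then
          (if f 0 = x ∧ f (Fin.last (exps m).length) = t then
          if IsStrictChain (fun x1 x2 => x1 < x2) f ∧
            ∀ i : Fin (exps m).length, rk (f i.succ) - rk (f i.castSucc) = (exps m).get i then
            ∏ i : Fin (exps m).length, G (PsiRel k (· < ·) rk (f i.castSucc) (f i.succ)) else 0
          else 0) else 0) := by
      intro x
      split_ifs
      · rfl
      · simp
    rw [Finset.sum_congr rfl (fun x _ => hr x), Finset.sum_comm, map_sum]
    apply Finset.sum_congr rfl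
    intro f _
    rw [Finset.sum_eq_single (f 0) (by intro x _ hx; simp [hx.symm]) (by simp)]
    have hiff : (exps m = List.ofFn fun i : Fin (exps m).length =>
        rk (f i.succ) - rk (f i.castSucc)) ↔
        ∀ i : Fin (exps m).length, rk (f i.succ) - rk (f i.castSucc) = (exps m).get i := by
      constructor
      · intro h i
        have h2 : (List.ofFn (exps m).get) = List.ofFn fun i : Fin (exps m).length =>
            rk (f i.succ) - rk (f i.castSucc) := by rw [List.ofFn_get]; exact h
        exact (congrFun (List.ofFn_injective h2) i).symm
      · intro h
        conv_lhs => rw [← List.ofFn_get (exps m)]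
        congr 1
        funext i
        exact (h i).symm
    have hMB : ∀ p ps, MvPowerSeries.coeff m (MB k p ps) =
      if m none = p ∧ exps m = ps then (1 : k) else 0 := fun p ps => rfl
    rw [apply_ite (MvPowerSeries.coeff m), map_zero, MvPowerSeries.coeff_smul, hMB]
    have he : (m none = rk (f 0) - 1) ↔ rk (f 0) - 1 = m none := eq_comm
    simp only [hiff, he]
    by_cases h1 : IsStrictChain (fun x1 x2 => x1 < x2) f <;>
    by_cases h2 : b < f 0 <;>
    by_cases h3 : f (Fin.last (exps m).length) = t <;>
    by_cases h4 : rk (f 0) - 1 = m none <;>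
    by_cases h5 : ∀ i : Fin (exps m).length, rk (f i.succ) - rk (f i.castSucc) = (exps m).get i <;>
    simp [h1, h2, h3, h4, h5]
  · intro n hn
    rw [map_sum]
    apply Finset.sum_eq_zero
    intro f _
    have hMB : ∀ p ps, MvPowerSeries.coeff m (MB k p ps) =
      if m none = p ∧ exps m = ps then (1 : k) else 0 := fun p ps => rfl
    rw [apply_ite (MvPowerSeries.coeff m), map_zero, MvPowerSeries.coeff_smul, hMB]
    split_ifs with h1 h2
    · exfalso
      apply hn
      rw [h2.2, List.length_ofFn]
    · simp
    · rfl

/-- The exponent of a multichain. -/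
def dd {A : Type} (N : ℕ) (r : A → ℕ) (f : Fin (N + 1) → A) : Option ℕ →₀ ℕ :=
  Finsupp.single none (r (f 0)) +
    ∑ i : Fin N, Finsupp.single (some (i : ℕ)) (r (f i.succ) - r (f i.castSucc))

theorem dd_none {A : Type} (N : ℕ) (r : A → ℕ) (f : Fin (N + 1) → A) :
    dd N r f none = r (f 0) := by
  simp [dd, Finsupp.finsetSum_apply]

theorem dd_some {A : Type} (N : ℕ) (r : A → ℕ) (f : Fin (N + 1) → A) (i : Fin N) :
    dd N r f (some (i : ℕ)) = r (f i.succ) - r (f i.castSucc) := by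
  simp only [dd, Finsupp.add_apply, Finsupp.finsetSum_apply, Finsupp.single_apply]
  simp only [reduceCtorEq, if_false, zero_add, Option.some.injEq, Fin.val_inj]
  simp only [Finset.sum_ite_eq', Finset.mem_univ, if_true]

theorem dd_ge {A : Type} (N : ℕ) (r : A → ℕ) (f : Fin (N + 1) → A) (i : ℕ) (h : N ≤ i) :
    dd N r f (some i) = 0 := by
  simp only [dd, Finsupp.add_apply, Finsupp.finsetSum_apply, Finsupp.single_apply]
  simp
  intro j hj
  omega

theorem dd_eq_iff {A : Type} (N : ℕ) (r : A → ℕ) (f : Fin (N + 1) → A) (m : Option ℕ →₀ ℕ)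
    (hN : ∀ i, N ≤ i → m (some i) = 0) :
    m = dd N r f ↔ r (f 0) = m none ∧
      ∀ i : Fin N, r (f i.succ) - r (f i.castSucc) = m (some (i : ℕ)) := by
  constructor
  · rintro rfl
    exact ⟨(dd_none _ _ _).symm, fun i => (dd_some _ _ _ i).symm⟩
  · rintro ⟨h1, h2⟩
    ext x
    rcases x with _ | i
    · rw [dd_none, h1]
    · by_cases hi : i < N
      · have h3 := dd_some N r f ⟨i, hi⟩
        have h4 := h2 ⟨i, hi⟩
        simp only at h3 h4
        rw [h3, h4]
      · rw [dd_ge _ _ _ _ (not_lt.1 hi), hN _ (not_lt.1 hi)]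

open Classical in
/-- The weight of a multichain ending at `t`. -/
def wtf {k A : Type} [Field k] (N : ℕ) (g : A → A → k) (t : A) (f : Fin (N + 1) → A) : k :=
  if f (Fin.last N) = t then ∏ i : Fin N, g (f i.castSucc) (f i.succ) else 0

open Classical in
/-- The generating function of multichains with `N` steps. -/
def Ser {k A : Type} [Field k] [Fintype A] (N : ℕ) (r : A → ℕ) (g : A → A → k) (t : A) :
    MvPowerSeries (Option ℕ) k :=
  ∑ f : Fin (N + 1) → A, MvPowerSeries.monomial (dd N r f) (wtf N g t f)

open Classical in
theorem Ser_mul {k A B : Type} [Field k] [Fintype A] [Fintype B] (N : ℕ) (r : A → ℕ) (s : B → ℕ)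
    (g : A → A → k) (h : B → B → k) (t : A) (u : B)
    (hg : ∀ x y, g x y ≠ 0 → r x ≤ r y) (hh : ∀ x y, h x y ≠ 0 → s x ≤ s y) :
    Ser N (fun p : A × B => r p.1 + s p.2) (fun p q => g p.1 q.1 * h p.2 q.2) (t, u) =
      Ser N r g t * Ser N s h u := by
  unfold Ser
  rw [Finset.sum_mul_sum, ← Fintype.sum_prod_type']
  refine Fintype.sum_equiv (Equiv.arrowProdEquivProdArrow (Fin (N + 1)) (fun _ => A) (fun _ => B))
    _ _ (fun f => ?_)
  rw [MvPowerSeries.monomial_mul_monomial]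
  change _ = MvPowerSeries.monomial (dd N r (fun c => (f c).1) + dd N s (fun c => (f c).2))
    (wtf N g t (fun c => (f c).1) * wtf N h u (fun c => (f c).2))
  have hc : wtf N (fun p q : A × B => g p.1 q.1 * h p.2 q.2) (t, u) f =
      wtf N g t (fun c => (f c).1) * wtf N h u (fun c => (f c).2) := by
    simp only [wtf, Finset.prod_mul_distrib, Prod.ext_iff]
    by_cases h1 : (f (Fin.last N)).1 = t <;> by_cases h2 : (f (Fin.last N)).2 = u <;> simp [h1, h2]
  by_cases hz : (∏ i : Fin N, g (f i.castSucc).1 (f i.succ).1 *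
      h (f i.castSucc).2 (f i.succ).2) = 0
  · have h0 : wtf N (fun p q : A × B => g p.1 q.1 * h p.2 q.2) (t, u) f = 0 := by
      simp only [wtf]
      rw [hz, ite_self]
    rw [← hc, h0, map_zero, map_zero]
  · rw [hc]
    congr 2
    simp only [dd]
    rw [Finsupp.single_add, add_add_add_comm, ← Finset.sum_add_distrib]
    congr 1
    apply Finset.sum_congr rfl
    intro i _
    rw [← Finsupp.single_add]
    congr 1
    have := Finset.prod_ne_zero_iff.1 hz i (Finset.mem_univ i)
    have h1 := hg _ _ (left_ne_zero_of_mul this)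
    have h2 := hh _ _ (right_ne_zero_of_mul this)
    omega

open Classical in
theorem gFB_coeff_Ser (k : Type) [Field k] (G : AB k →ₗ[k] k) {A A' : Type} [Fintype A]
    [Fintype A'] [PartialOrder A] (rk : A → ℕ) (hrk : StrictMono rk) (b : A) (ι : A' → A)
    (hinj : Function.Injective ι) (hι : ∀ x, b < x ↔ ∃ a, ι a = x) (t : A')
    (m : Option ℕ →₀ ℕ) (N : ℕ) (hN : ∀ i, N ≤ i → m (some i) = 0) :
    MvPowerSeries.coeff m (gFB k G (· < ·) rk b (ι t)) =
      MvPowerSeries.coeff m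
        (Ser N (fun a => rk (ι a) - 1) (fun x y => gk k G rk (ι x) (ι y)) t) := by
  have hpos : ∀ a, 1 ≤ rk (ι a) := fun a => by
    have := hrk ((hι (ι a)).2 ⟨a, rfl⟩)
    omega
  rw [gFB_coeff, exps_prod _ (Kmat_zero k G rk hrk) m N hN]
  simp only [matrix_ofFn_prod]
  trans ∑ x : A, ∑ f : Fin (N + 1) → A, (if b < x ∧ rk x - 1 = m none then
      (if f 0 = x ∧ f (Fin.last N) = ι t then
        ∏ i : Fin N, Kmat k G rk (m (some (i : ℕ))) (f i.castSucc) (f i.succ) else 0) else 0)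
  · apply Finset.sum_congr rfl
    intro x _
    split_ifs
    · rfl
    · simp
  rw [Finset.sum_comm, Ser, map_sum]
  symm
  apply Finset.sum_of_injOn (fun f i => ι (f i))
  · intro f _ g _ hfg
    funext i
    exact hinj (congrFun hfg i)
  · intro f _; simp
  · intro f _ hf
    rw [Finset.sum_eq_single (f 0) (by intro x _ hx; simp [hx.symm]) (by simp)]
    by_contra hne
    apply hf
    have h0 : b < f 0 := by
      by_contra hc
      apply hne
      simp [hc]
    have hp : ∏ i : Fin N, Kmat k G rk (m (some (i : ℕ))) (f i.castSucc) (f i.succ) ≠ 0 := by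
      intro hc
      apply hne
      simp [hc]
    have hle : Monotone f := by
      rw [Fin.monotone_iff_le_succ]
      intro i
      by_contra hc
      apply Finset.prod_ne_zero_iff.1 hp i (Finset.mem_univ i)
      rw [Kmat, gk_eq_zero _ _ _ _ _ hc, ite_self]
    have hall : ∀ i, ∃ a, ι a = f i := fun i => (hι _).1 (h0.trans_le (hle (Fin.zero_le i)))
    choose g hg using hall
    exact ⟨g, by simp, funext hg⟩
  · intro f _
    rw [Finset.sum_eq_single (ι (f 0)) (by intro x _ hx; simp [hx.symm]) (by simp)]
    rw [MvPowerSeries.coeff_monomial, wtf]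
    simp only [dd_eq_iff _ _ _ _ hN]
    have hb : b < ι (f 0) := (hι _).2 ⟨_, rfl⟩
    have hd : ∀ i : Fin N, rk (ι (f i.succ)) - 1 - (rk (ι (f i.castSucc)) - 1) =
        rk (ι (f i.succ)) - rk (ι (f i.castSucc)) := fun i => by
      have := hpos (f i.succ)
      have := hpos (f i.castSucc)
      omega
    simp only [hd, hb, true_and, hinj.eq_iff]
    have hprod : ∏ i : Fin N, Kmat k G rk (m (some (i : ℕ))) (ι (f i.castSucc)) (ι (f i.succ)) =
        if ∀ i : Fin N, rk (ι (f i.succ)) - rk (ι (f i.castSucc)) = m (some (i : ℕ)) then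
          ∏ i : Fin N, gk k G rk (ι (f i.castSucc)) (ι (f i.succ)) else 0 := by
      split_ifs with h
      · apply Finset.prod_congr rfl
        intro i _
        rw [Kmat, if_pos (h i)]
      · push Not at h
        obtain ⟨i, hi⟩ := h
        apply Finset.prod_eq_zero (Finset.mem_univ i)
        rw [Kmat, if_neg hi]
    rw [hprod]
    by_cases h1 : rk (ι (f 0)) - 1 = m none <;>
    by_cases h2 : ∀ i : Fin N, rk (ι (f i.succ)) - rk (ι (f i.castSucc)) = m (some (i : ℕ)) <;>
    by_cases h3 : f (Fin.last N) = t <;> simp [h1, h2, h3]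

theorem isRankFun_Icc {α : Type} [Fintype α] [PartialOrder α] [OrderBot α] {rk : α → ℕ}
    (h : IsRankFun α rk) (x y : α) [hxy : Fact (x ≤ y)] :
    IsRankFun (Set.Icc x y) (fun z => rk z.1 - rk x) := by
  refine ⟨by change rk x - rk x = 0; simp, ?_⟩
  intro a c hac
  have hcov : a.1 ⋖ c.1 := by
    refine ⟨hac.1, fun z h1 h2 => ?_⟩
    exact hac.2 (c := ⟨z, a.2.1.trans h1.le, h2.le.trans c.2.2⟩) h1 h2
  have h1 := h.2 _ _ hcov
  have h2 := (rank_strictMono h).monotone a.2.1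
  change rk c.1 - rk x = rk a.1 - rk x + 1
  omega

/-- The rank function of the diamond product. -/
def rkD {α β : Type} [PartialOrder α] [PartialOrder β] [OrderBot α] [OrderBot β]
    (rkα : α → ℕ) (rkβ : β → ℕ) : WithBot ({x : α // x ≠ ⊥} × {y : β // y ≠ ⊥}) → ℕ := fun d =>
  match d with
  | none => 0
  | some p => rkα p.1.1 + rkβ p.2.1 - 1

section Diamond

variable {α β : Type} [Fintype α] [Fintype β] [PartialOrder α] [PartialOrder β]
    [OrderBot α] [OrderBot β] {rkα : α → ℕ} {rkβ : β → ℕ}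

theorem rank_pos (hα : IsRankFun α rkα) (x : {x : α // x ≠ ⊥}) : 1 ≤ rkα x.1 := by
  have := rank_strictMono hα (bot_lt_iff_ne_bot.2 x.2)
  omega

theorem rkD_coe (p : {x : α // x ≠ ⊥} × {y : β // y ≠ ⊥}) :
    rkD rkα rkβ (p : WithBot ({x : α // x ≠ ⊥} × {y : β // y ≠ ⊥})) =
      rkα p.1.1 + rkβ p.2.1 - 1 := rfl

theorem rkD_strictMono (hα : IsRankFun α rkα) (hβ : IsRankFun β rkβ) :
    StrictMono (rkD rkα rkβ) := by
  intro d e hde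
  induction e using WithBot.recBotCoe with
  | bot => simp at hde
  | coe q =>
    have q1 := rank_pos hα q.1
    have q2 := rank_pos hβ q.2
    induction d using WithBot.recBotCoe with
    | bot =>
      rw [rkD_coe]
      change 0 < _
      omega
    | coe p =>
      have p1 := rank_pos hα p.1
      have p2 := rank_pos hβ p.2
      rw [rkD_coe, rkD_coe]
      rw [WithBot.coe_lt_coe, Prod.lt_iff] at hde
      rcases hde with ⟨h1, h2⟩ | ⟨h1, h2⟩
      · have := rank_strictMono hα h1
        have := (rank_strictMono hβ).monotone h2
        omega
      · have := (rank_strictMono hα).monotone h1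
        have := rank_strictMono hβ h2
        omega

theorem gk_prod (k : Type) [Field k] (G : AB k →ₗ[k] k) (hG : IsCharacter k G)
    (hα : IsRankFun α rkα) (hβ : IsRankFun β rkβ)
    (p q : {x : α // x ≠ ⊥} × {y : β // y ≠ ⊥}) :
    gk k G (rkD rkα rkβ) (p : WithBot ({x : α // x ≠ ⊥} × {y : β // y ≠ ⊥})) q =
      gk k G rkα p.1.1 q.1.1 * gk k G rkβ p.2.1 q.2.1 := by
  classical
  have ma := rank_strictMono hα
  have mb := rank_strictMono hβ
  by_cases hle : p ≤ q
  swap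
  · rw [gk_eq_zero _ _ _ _ _ (by rwa [WithBot.coe_le_coe])]
    rw [Prod.le_def, not_and_or] at hle
    rcases hle with h | h
    · rw [gk_eq_zero k G rkα _ _ h, zero_mul]
    · rw [gk_eq_zero k G rkβ _ _ h, mul_zero]
  obtain ⟨⟨x, hx⟩, ⟨x', hx'⟩⟩ := p
  obtain ⟨⟨y, hy⟩, ⟨y', hy'⟩⟩ := q
  have h1 : x ≤ y := hle.1
  have h2 : x' ≤ y' := hle.2
  have hb : ∀ z : α, x ≤ z → z ≠ ⊥ := fun z hz h => hx (le_bot_iff.1 (h ▸ hz))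
  have hb' : ∀ z : β, x' ≤ z → z ≠ ⊥ := fun z hz h => hx' (le_bot_iff.1 (h ▸ hz))
  have px := rank_pos hα ⟨x, hx⟩
  have px' := rank_pos hβ ⟨x', hx'⟩
  simp only at px px'
  by_cases e1 : x = y
  · subst e1
    by_cases e2 : x' = y'
    · subst e2; simp [gk]
    · have l2 : x' < y' := lt_of_le_of_ne h2 e2
      have := Fact.mk h2
      have hD : PsiRel k (· < ·) (rkD rkα rkβ)
          (((⟨x, hx⟩, ⟨x', hx'⟩) : {x : α // x ≠ ⊥} × {y : β // y ≠ ⊥}) : WithBot _)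
          (((⟨x, hx⟩, ⟨y', hy'⟩) : {x : α // x ≠ ⊥} × {y : β // y ≠ ⊥}) : WithBot _) =
          PsiRel k (· < ·) (fun z : Set.Icc x' y' => rkβ z.1 - rkβ x') ⊥ ⊤ := by
        refine PsiRel_transport k (A := Set.Icc x' y') (fun z =>
          (((⟨x, hx⟩, ⟨z.1, hb' z.1 z.2.1⟩) : {x : α // x ≠ ⊥} × {y : β // y ≠ ⊥}) :
            WithBot ({x : α // x ≠ ⊥} × {y : β // y ≠ ⊥})))
          ?_ ?_ _ _ (rkα x + rkβ x' - 1) ?_ ⊥ ⊤ ?_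
        · intro a c
          simp only [WithBot.coe_lt_coe, Prod.mk_lt_mk, lt_self_iff_false, false_and, le_refl,
            true_and, false_or, Subtype.mk_lt_mk]
          rfl
        · intro a c hac
          simp only [WithBot.coe_inj, Prod.mk.injEq, true_and, Subtype.mk.injEq] at hac
          exact Subtype.ext hac
        · intro a
          rw [rkD_coe]
          have := mb.monotone a.2.1
          simp only
          omega
        · intro z hz1 hz2
          induction z using WithBot.recBotCoe with
          | bot => simp at hz1
          | coe z =>
            rw [WithBot.coe_le_coe] at hz1 hz2
            refine ⟨⟨z.2.1, hz1.2, hz2.2⟩, ?_⟩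
            rw [WithBot.coe_inj]
            apply Prod.ext
            · exact le_antisymm hz1.1 hz2.1
            · rfl
      have hB : PsiRel k (· < ·) rkβ x' y' =
          PsiRel k (· < ·) (fun z : Set.Icc x' y' => rkβ z.1 - rkβ x') ⊥ ⊤ := by
        refine PsiRel_transport k (A := Set.Icc x' y') Subtype.val (fun _ _ => Iff.rfl)
          Subtype.val_injective _ _ (rkβ x') ?_ ⊥ ⊤ ?_
        · intro a
          have := mb.monotone a.2.1
          omega
        · intro z hz1 hz2
          exact ⟨⟨z, hz1, hz2⟩, rfl⟩
      simp only [gk, if_true, one_mul]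
      rw [if_neg (by simpa using e2), if_pos (by
        rw [WithBot.coe_lt_coe, Prod.mk_lt_mk]; exact Or.inr ⟨le_rfl, l2⟩), if_neg e2, if_pos l2,
        hD, hB]
  · have l1 : x < y := lt_of_le_of_ne h1 e1
    have := Fact.mk h1
    have hA : PsiRel k (· < ·) rkα x y =
        PsiRel k (· < ·) (fun z : Set.Icc x y => rkα z.1 - rkα x) ⊥ ⊤ := by
      refine PsiRel_transport k (A := Set.Icc x y) Subtype.val (fun _ _ => Iff.rfl)
        Subtype.val_injective _ _ (rkα x) ?_ ⊥ ⊤ ?_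
      · intro a
        have := ma.monotone a.2.1
        omega
      · intro z hz1 hz2
        exact ⟨⟨z, hz1, hz2⟩, rfl⟩
    by_cases e2 : x' = y'
    · subst e2
      have hD : PsiRel k (· < ·) (rkD rkα rkβ)
          (((⟨x, hx⟩, ⟨x', hx'⟩) : {x : α // x ≠ ⊥} × {y : β // y ≠ ⊥}) : WithBot _)
          (((⟨y, hy⟩, ⟨x', hx'⟩) : {x : α // x ≠ ⊥} × {y : β // y ≠ ⊥}) : WithBot _) =
          PsiRel k (· < ·) (fun z : Set.Icc x y => rkα z.1 - rkα x) ⊥ ⊤ := by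
        refine PsiRel_transport k (A := Set.Icc x y) (fun z =>
          (((⟨z.1, hb z.1 z.2.1⟩, ⟨x', hx'⟩) : {x : α // x ≠ ⊥} × {y : β // y ≠ ⊥}) :
            WithBot ({x : α // x ≠ ⊥} × {y : β // y ≠ ⊥})))
          ?_ ?_ _ _ (rkα x + rkβ x' - 1) ?_ ⊥ ⊤ ?_
        · intro a c
          simp only [WithBot.coe_lt_coe, Prod.mk_lt_mk, lt_self_iff_false, and_false, le_refl,
            and_true, or_false, Subtype.mk_lt_mk]
          rfl
        · intro a c hac
          simp only [WithBot.coe_inj, Prod.mk.injEq, and_true, Subtype.mk.injEq] at hac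
          exact Subtype.ext hac
        · intro a
          rw [rkD_coe]
          have := ma.monotone a.2.1
          simp only
          omega
        · intro z hz1 hz2
          induction z using WithBot.recBotCoe with
          | bot => simp at hz1
          | coe z =>
            rw [WithBot.coe_le_coe] at hz1 hz2
            refine ⟨⟨z.1.1, hz1.1, hz2.1⟩, ?_⟩
            rw [WithBot.coe_inj]
            apply Prod.ext
            · rfl
            · exact le_antisymm hz1.2 hz2.2
      simp only [gk, if_true, mul_one]
      rw [if_neg (by simpa using e1), if_pos (by
        rw [WithBot.coe_lt_coe, Prod.mk_lt_mk]; exact Or.inl ⟨l1, le_rfl⟩), if_neg e1, if_pos l1,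
        hD, hA]
    · have l2 : x' < y' := lt_of_le_of_ne h2 e2
      have := Fact.mk h2
      have hB : PsiRel k (· < ·) rkβ x' y' =
          PsiRel k (· < ·) (fun z : Set.Icc x' y' => rkβ z.1 - rkβ x') ⊥ ⊤ := by
        refine PsiRel_transport k (A := Set.Icc x' y') Subtype.val (fun _ _ => Iff.rfl)
          Subtype.val_injective _ _ (rkβ x') ?_ ⊥ ⊤ ?_
        · intro a
          have := mb.monotone a.2.1
          omega
        · intro z hz1 hz2
          exact ⟨⟨z, hz1, hz2⟩, rfl⟩
      have hD : PsiRel k (· < ·) (rkD rkα rkβ)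
          (((⟨x, hx⟩, ⟨x', hx'⟩) : {x : α // x ≠ ⊥} × {y : β // y ≠ ⊥}) : WithBot _)
          (((⟨y, hy⟩, ⟨y', hy'⟩) : {x : α // x ≠ ⊥} × {y : β // y ≠ ⊥}) : WithBot _) =
          PsiRel k (· < ·) (fun p : Set.Icc x y × Set.Icc x' y' =>
            (rkα p.1.1 - rkα x) + (rkβ p.2.1 - rkβ x')) (⊥, ⊥) (⊤, ⊤) := by
        refine PsiRel_transport k (A := Set.Icc x y × Set.Icc x' y') (fun z =>
          (((⟨z.1.1, hb z.1.1 z.1.2.1⟩, ⟨z.2.1, hb' z.2.1 z.2.2.1⟩) :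
            {x : α // x ≠ ⊥} × {y : β // y ≠ ⊥}) :
            WithBot ({x : α // x ≠ ⊥} × {y : β // y ≠ ⊥})))
          ?_ ?_ _ _ (rkα x + rkβ x' - 1) ?_ (⊥, ⊥) (⊤, ⊤) ?_
        · intro a c
          rw [WithBot.coe_lt_coe, Prod.mk_lt_mk, Prod.lt_iff]
          rfl
        · intro a c hac
          simp only [WithBot.coe_inj, Prod.mk.injEq, Subtype.mk.injEq] at hac
          exact Prod.ext (Subtype.ext hac.1) (Subtype.ext hac.2)
        · intro a
          rw [rkD_coe]
          have := ma.monotone a.1.2.1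
          have := mb.monotone a.2.2.1
          simp only
          omega
        · intro z hz1 hz2
          induction z using WithBot.recBotCoe with
          | bot => simp at hz1
          | coe z =>
            rw [WithBot.coe_le_coe] at hz1 hz2
            exact ⟨(⟨z.1.1, hz1.1, hz2.1⟩, ⟨z.2.1, hz1.2, hz2.2⟩), rfl⟩
      have hmul := hG (Set.Icc x y) (Set.Icc x' y') (fun z => rkα z.1 - rkα x)
        (fun z => rkβ z.1 - rkβ x') (isRankFun_Icc hα x y) (isRankFun_Icc hβ x' y')
        (by have := ma l1; change 1 ≤ rkα y - rkα x; omega)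
        (by have := mb l2; change 1 ≤ rkβ y' - rkβ x'; omega)
      simp only [gk]
      rw [if_neg (by simp [e1]), if_pos (by
        rw [WithBot.coe_lt_coe, Prod.mk_lt_mk]; exact Or.inl ⟨l1, h2⟩), if_neg e1, if_pos l1,
        if_neg e2, if_pos l2, hD, hA, hB, hmul]

end Diamond

theorem gFB_diamond (k : Type) [Field k] (G : AB k →ₗ[k] k) (hG : IsCharacter k G)
    (α β : Type) [Fintype α] [Fintype β] [PartialOrder α] [PartialOrder β]
    [BoundedOrder α] [BoundedOrder β] (rkα : α → ℕ) (rkβ : β → ℕ)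
    (hα : IsRankFun α rkα) (hβ : IsRankFun β rkβ) (ta : (⊤ : α) ≠ ⊥) (tb : (⊤ : β) ≠ ⊥) :
    gFB k G (· < ·) (rkD rkα rkβ) ⊥
      (((⟨⊤, ta⟩, ⟨⊤, tb⟩) : {x : α // x ≠ ⊥} × {y : β // y ≠ ⊥}) : WithBot _) =
      gFB k G (· < ·) rkα (⊥ : α) (⊤ : α) * gFB k G (· < ·) rkβ (⊥ : β) (⊤ : β) := by
  classical
  have : Fintype (WithBot ({x : α // x ≠ ⊥} × {y : β // y ≠ ⊥})) := inferInstanceAs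
    (Fintype (Option _))
  ext m
  obtain ⟨N, hN⟩ : ∃ N, ∀ i, N ≤ i → m (some i) = 0 := by
    obtain ⟨N, hN⟩ := (tpart m).support.bddAbove
    refine ⟨N + 1, fun i hi => ?_⟩
    by_contra hc
    have : i ≤ N := hN (by simpa [tpart] using hc)
    omega
  have hsub : ∀ m' : Option ℕ →₀ ℕ, m' ≤ m → ∀ i, N ≤ i → m' (some i) = 0 := by
    intro m' hm i hi
    have := hm (some i)
    rw [hN i hi] at this
    omega
  have cA : ∀ m' ≤ m, MvPowerSeries.coeff m' (gFB k G (· < ·) rkα (⊥ : α) (⊤ : α)) = _ :=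
    fun m' hm => gFB_coeff_Ser k G rkα (rank_strictMono hα) ⊥
      (Subtype.val : {x : α // x ≠ ⊥} → α) Subtype.val_injective
      (by intro x; simp [bot_lt_iff_ne_bot]) ⟨⊤, ta⟩ m' N (hsub m' hm)
  have cB : ∀ m' ≤ m, MvPowerSeries.coeff m' (gFB k G (· < ·) rkβ (⊥ : β) (⊤ : β)) = _ :=
    fun m' hm => gFB_coeff_Ser k G rkβ (rank_strictMono hβ) ⊥
      (Subtype.val : {x : β // x ≠ ⊥} → β) Subtype.val_injective
      (by intro x; simp [bot_lt_iff_ne_bot]) ⟨⊤, tb⟩ m' N (hsub m' hm)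
  refine (gFB_coeff_Ser k G (rkD rkα rkβ) (rkD_strictMono hα hβ) ⊥
    (fun p : {x : α // x ≠ ⊥} × {y : β // y ≠ ⊥} =>
      (p : WithBot ({x : α // x ≠ ⊥} × {y : β // y ≠ ⊥}))) WithBot.coe_injective
    (by intro x; rw [bot_lt_iff_ne_bot, WithBot.ne_bot_iff_exists]) (⟨⊤, ta⟩, ⟨⊤, tb⟩) m N hN).trans ?_
  have hS := Ser_mul N (fun a : {x : α // x ≠ ⊥} => rkα a.1 - 1)
    (fun a : {x : β // x ≠ ⊥} => rkβ a.1 - 1)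
    (fun x y => gk k G rkα x.1 y.1) (fun x y => gk k G rkβ x.1 y.1) ⟨⊤, ta⟩ ⟨⊤, tb⟩
    (by
      intro x y h
      have : x.1 ≤ y.1 := by
        by_contra hc
        exact h (gk_eq_zero _ _ _ _ _ hc)
      have := (rank_strictMono hα).monotone this
      omega)
    (by
      intro x y h
      have : x.1 ≤ y.1 := by
        by_contra hc
        exact h (gk_eq_zero _ _ _ _ _ hc)
      have := (rank_strictMono hβ).monotone this
      omega)
  have hr : (fun p : {x : α // x ≠ ⊥} × {y : β // y ≠ ⊥} =>
      rkD rkα rkβ (p : WithBot ({x : α // x ≠ ⊥} × {y : β // y ≠ ⊥})) - 1) =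
      fun p => (rkα p.1.1 - 1) + (rkβ p.2.1 - 1) := by
    funext p
    have := rank_pos hα p.1
    have := rank_pos hβ p.2
    rw [rkD_coe]
    omega
  simp only [gk_prod k G hG hα hβ]
  rw [hr, hS, MvPowerSeries.coeff_mul, MvPowerSeries.coeff_mul]
  apply Finset.sum_congr rfl
  intro p hp
  rw [Finset.HasAntidiagonal.mem_antidiagonal] at hp
  rw [cA p.1 (hp ▸ le_self_add), cB p.2 (hp ▸ le_add_self)]

end Helpers

theorem chain_map_first_kind_multiplicative
    (k : Type) [Field k] (G : AB k →ₗ[k] k) (hG : IsCharacter k G)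
    (α β : Type) [Fintype α] [Fintype β] [PartialOrder α] [PartialOrder β]
    [BoundedOrder α] [BoundedOrder β] (rkα : α → ℕ) (rkβ : β → ℕ)
    (hα : IsRankFun α rkα) (hβ : IsRankFun β rkβ)
    (h1α : 1 ≤ rkα (⊤ : α)) (h1β : 1 ≤ rkβ (⊤ : β)) :
    gFB k G (· < ·)
        (fun d : WithBot ({x : α // x ≠ ⊥} × {y : β // y ≠ ⊥}) =>
          match d with
          | none => 0
          | some p => rkα p.1.1 + rkβ p.2.1 - 1)
        (⊥ : WithBot ({x : α // x ≠ ⊥} × {y : β // y ≠ ⊥}))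
        ((⟨⟨⊤, by intro hc; rw [hc, hα.1] at h1α; omega⟩,
           ⟨⊤, by intro hc; rw [hc, hβ.1] at h1β; omega⟩⟩ :
          ({x : α // x ≠ ⊥} × {y : β // y ≠ ⊥})) :
            WithBot ({x : α // x ≠ ⊥} × {y : β // y ≠ ⊥})) =
      gFB k G (· < ·) rkα (⊥ : α) (⊤ : α) * gFB k G (· < ·) rkβ (⊥ : β) (⊤ : β) := by
  have h := gFB_diamond k G hG α β rkα rkβ hα hβ
    (by intro hc; rw [hc, hα.1] at h1α; omega) (by intro hc; rw [hc, hβ.1] at h1β; omega)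
  have hr : (fun d : WithBot ({x : α // x ≠ ⊥} × {y : β // y ≠ ⊥}) =>
          match d with
          | none => 0
          | some p => rkα p.1.1 + rkβ p.2.1 - 1) = rkD rkα rkβ := by
    funext d
    cases d <;> rfl
  rw [← hr] at h
  exact h

end Tcheb
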